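/- Let ν = (ν_1 ≥ … ≥ ν_k ≥ 0) be a partition, let 1 ≤ t ≤ k, and let n ≥ 1. Then the polynomial s^{[n]}_ν · s^{[n]}_{(ν_1,…,ν_{t−1},ν_{t+1},…,ν_k)} − s^{[n]}_{(ν_1−1,…,ν_{t−1}−1,ν_t,…,ν_k)} · s^{[n]}_{(ν_1+1,…,ν_{t−1}+1,ν_{t+1},…,ν_k)} in x_1,…,x_n is Schur positive, where s^{[n]}_α := 0 if the sequence α is not a partition. -/

import Mathlib

/-- A semistandard Young tableau of shape `(lam 0, lam 1, …, lam (k-1))` (so `lam i` is the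
length of the `(i+1)`-st row), with entries in `{a, a+1, …, b}`: rows weakly increase,
columns strictly increase.  Entries outside the shape are `0`. -/
structure SSYT (k : ℕ) (lam : ℕ → ℤ) (a b : ℕ) where
  entry : ℕ → ℕ → ℕ
  zero_outside : ∀ i j : ℕ, ¬(i < k ∧ (j : ℤ) < lam i) → entry i j = 0
  lower : ∀ i j : ℕ, i < k → (j : ℤ) < lam i → a ≤ entry i j
  upper : ∀ i j : ℕ, i < k → (j : ℤ) < lam i → entry i j ≤ b
  row_weak : ∀ i j₁ j₂ : ℕ, i < k → j₁ ≤ j₂ → (j₂ : ℤ) < lam i → entry i j₁ ≤ entry i j₂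
  col_strict : ∀ i₁ i₂ j : ℕ, i₁ < i₂ → i₂ < k → (j : ℤ) < lam i₂ → entry i₁ j < entry i₂ j

/-- The monomial `Π_i x_i^{m(i,T)}` of a tableau: the product of `x_{T(c)}` over the
cells `c` of the shape. -/
noncomputable def SSYT.weight {k : ℕ} {lam : ℕ → ℤ} {a b : ℕ} (T : SSYT k lam a b) :
    MvPolynomial ℕ ℤ :=
  ∏ i ∈ Finset.range k, ∏ j ∈ Finset.range (lam i).toNat, MvPolynomial.X (T.entry i j)

/-- `(lam 0, …, lam (k-1))` is a partition: weakly decreasing with nonnegative entries. -/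
def IsPartitionSeq (k : ℕ) (lam : ℕ → ℤ) : Prop :=
  (∀ i, i + 1 < k → lam (i + 1) ≤ lam i) ∧ (∀ i, i < k → 0 ≤ lam i)

/-- The Schur polynomial `s^{[a,b]}_lam = Σ_T Π_i x_i^{m(i,T)}`, the sum running over all
semistandard Young tableaux of shape `lam` with entries in `{a,…,b}`; by convention it is
`0` if `lam` is not a partition. -/
noncomputable def schur (k : ℕ) (lam : ℕ → ℤ) (a b : ℕ) : MvPolynomial ℕ ℤ :=
  letI := Classical.dec (IsPartitionSeq k lam)
  if IsPartitionSeq k lam then ∑ᶠ T : SSYT k lam a b, T.weight else 0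

/-- A polynomial in `x_1,…,x_n` is Schur positive if it is a finite sum `Σ_α c_α s^{[n]}_α`
over partitions `α` with coefficients `c_α ∈ ℕ` (encoded by a list of shapes, allowing
repetition). -/
def SchurPositive (n : ℕ) (f : MvPolynomial ℕ ℤ) : Prop :=
  ∃ L : List (ℕ × (ℕ → ℤ)),
    (∀ p ∈ L, IsPartitionSeq p.1 p.2) ∧
    f = (L.map fun p => schur p.1 p.2 1 n).sum


/-! ### Gelfand–Tsetlin patterns -/

/-- Gelfand–Tsetlin patterns with `n` levels and top row `μ`: `P m r` is the number of entries
`≤ m` in row `r` of the corresponding tableau. -/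
def GT (n : ℕ) (μ : ℕ → ℕ) : Set (ℕ → ℕ → ℕ) :=
  {P | (∀ r, P 0 r = 0) ∧ (∀ m, m < n → ∀ r, P (m+1) (r+1) ≤ P m r ∧ P m r ≤ P (m+1) r) ∧
    ∀ m, n ≤ m → ∀ r, P m r = μ r}

/-- number of letters `m` in columns with index `≥ c`. -/
def wtc (n : ℕ) (P : ℕ → ℕ → ℕ) (c m : ℕ) : ℕ :=
  ∑ r ∈ Finset.range n, ((P (m+1) r - c) - (P m r - c))

/-- size of level `m` in columns with index `< c`. -/
def vc (n : ℕ) (P : ℕ → ℕ → ℕ) (c m : ℕ) : ℕ := ∑ r ∈ Finset.range n, min (P m r) c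

/-- number of letters `m`. -/
def wt (n : ℕ) (P : ℕ → ℕ → ℕ) (m : ℕ) : ℕ := wtc n P 0 m

section GTlemmas
variable {n : ℕ} {μ : ℕ → ℕ} {P : ℕ → ℕ → ℕ}

lemma GT.mono (hP : P ∈ GT n μ) (m r : ℕ) : P m r ≤ P (m+1) r := by
  by_cases h : m < n
  · exact (hP.2.1 m h r).2
  · rw [hP.2.2 m (by omega), hP.2.2 (m+1) (by omega)]

lemma GT.monotone (hP : P ∈ GT n μ) (r : ℕ) : Monotone (fun m => P m r) :=
  monotone_nat_of_le_succ (fun m => GT.mono hP m r)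

lemma GT.le_top (hP : P ∈ GT n μ) (m r : ℕ) : P m r ≤ μ r := by
  rw [← hP.2.2 (max m n) (by omega) r]
  exact GT.monotone hP r (by omega)

lemma GT.vanish (hP : P ∈ GT n μ) : ∀ m, m ≤ n → ∀ r, m ≤ r → P m r = 0 := by
  intro m
  induction m with
  | zero => intro _ r _; exact hP.1 r
  | succ m ih =>
    intro hm r hr
    obtain ⟨r, rfl⟩ : ∃ r', r = r' + 1 := ⟨r - 1, by omega⟩
    have := (hP.2.1 m (by omega) r).1
    have := ih (by omega) r (by omega)
    omega

lemma GT.vanish' (hP : P ∈ GT n μ) (m r : ℕ) (hr : n ≤ r) : P m r = 0 := by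
  have h1 := GT.le_top hP m r
  have h2 := GT.vanish hP n le_rfl r hr
  rw [hP.2.2 n le_rfl] at h2
  omega

lemma GT.finite (n : ℕ) (μ : ℕ → ℕ) : (GT n μ).Finite := by
  classical
  let B := ∑ r ∈ Finset.range n, μ r
  have hB : ∀ P ∈ GT n μ, ∀ m r, P m r < B + 1 := by
    intro P hP m r
    by_cases hr : r < n
    · have h1 := GT.le_top hP m r
      have h2 : μ r ≤ B := Finset.single_le_sum (f := μ) (fun _ _ => Nat.zero_le _)
        (Finset.mem_range.2 hr)
      omega
    · rw [GT.vanish' hP m r (by omega)]; omega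
  let F : GT n μ → (Fin n → Fin n → Fin (B+1)) := fun P m r => ⟨P.1 m r, hB P.1 P.2 m r⟩
  have hF : Function.Injective F := by
    intro P Q h
    apply Subtype.ext
    funext m r
    by_cases hm : m < n
    · by_cases hr : r < n
      · have := congrFun (congrFun h ⟨m, hm⟩) ⟨r, hr⟩
        simpa [F] using this
      · rw [GT.vanish' P.2 m r (by omega), GT.vanish' Q.2 m r (by omega)]
    · rw [P.2.2.2 m (by omega), Q.2.2.2 m (by omega)]
  exact Set.finite_coe_iff.1 (Finite.of_injective F hF)

lemma wtc_add_vc (hP : P ∈ GT n μ) (c m : ℕ) :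
    wt n P m + vc n P c m = wtc n P c m + vc n P c (m+1) := by
  unfold wt wtc vc
  rw [← Finset.sum_add_distrib, ← Finset.sum_add_distrib]
  apply Finset.sum_congr rfl
  intro r _
  have := GT.mono hP m r
  omega

lemma wtc_succ_le (c m : ℕ) (hP : P ∈ GT n μ) : wtc n P (c+1) m ≤ wtc n P c m := by
  unfold wtc
  apply Finset.sum_le_sum
  intro r _
  have := GT.mono hP m r
  omega

lemma wtc_le_succ (c m : ℕ) (hm : m < n) (hP : P ∈ GT n μ) :
    wtc n P c m ≤ wtc n P (c+1) m + 1 := by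
  have key : ∀ N, ∑ r ∈ Finset.range N, ((P (m+1) r - c) - (P m r - c)) +
      (if c < P (m+1) N then 1 else 0) ≤
      ∑ r ∈ Finset.range N, ((P (m+1) r - (c+1)) - (P m r - (c+1))) + 1 := by
    intro N
    induction N with
    | zero => simp; split_ifs <;> omega
    | succ N ih =>
      rw [Finset.sum_range_succ, Finset.sum_range_succ]
      have := hP.2.1 m hm N
      split_ifs at * <;> omega
  have := key n
  unfold wtc
  omega

lemma wtc_eq_succ (c m : ℕ) (hP : P ∈ GT n μ) (h : wtc n P c m = wtc n P (c+1) m) (r : ℕ) :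
    ¬ (P m r ≤ c ∧ c < P (m+1) r) := by
  rintro ⟨h1, h2⟩
  have hr : r < n := by
    by_contra hr
    rw [GT.vanish' hP (m+1) r (by omega)] at h2
    omega
  have : wtc n P (c+1) m < wtc n P c m := by
    unfold wtc
    apply Finset.sum_lt_sum
    · intro r _
      have := GT.mono hP m r
      omega
    · exact ⟨r, Finset.mem_range.2 hr, by omega⟩
  omega

lemma wtc_large (hP : P ∈ GT n μ) (c m : ℕ) (hc : ∀ r, μ r ≤ c) : wtc n P c m = 0 := by
  unfold wtc
  apply Finset.sum_eq_zero
  intro r _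
  have := GT.le_top hP (m+1) r
  have := hc r
  omega

end GTlemmas

/-! ### Partial Bender–Knuth toggles -/

/-- upper bound for a toggled value -/
def hiT (P : ℕ → ℕ → ℕ) (c k : ℕ) : ℕ → ℕ
  | 0 => min (P (k+1+1) 0) c
  | (r+1) => min (min (P (k+1+1) (r+1)) (P k r)) c

/-- lower bound for a toggled value -/
def loT (P : ℕ → ℕ → ℕ) (c k r : ℕ) : ℕ := max (min (P (k+1+1) (r+1)) c) (min (P k r) c)

/-- Bender–Knuth toggle of letters `k`, `k+1` in columns with index `< c`. -/
def tog (c k : ℕ) (P : ℕ → ℕ → ℕ) : ℕ → ℕ → ℕ := fun m r =>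
  if m = k + 1 ∧ P (k+1) r ≤ c then hiT P c k r + loT P c k r - P (k+1) r else P m r

section toglemmas
variable {n : ℕ} {μ : ℕ → ℕ} {P : ℕ → ℕ → ℕ} {c k : ℕ}

lemma tog_ne (m r : ℕ) (h : m ≠ k + 1) : tog c k P m r = P m r := by
  unfold tog; rw [if_neg (by tauto)]

lemma hiT_tog : hiT (tog c k P) c k = hiT P c k := by
  funext r
  cases r <;> simp [hiT, tog_ne]

lemma loT_tog : loT (tog c k P) c k = loT P c k := by
  funext r
  simp [loT, tog_ne]

lemma bounds (hP : P ∈ GT n μ) (hk : k + 1 < n) (r : ℕ) :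
    min (P (k+1) r) c ≤ hiT P c k r ∧ loT P c k r ≤ min (P (k+1) r) c ∧ hiT P c k r ≤ c := by
  have h1 := hP.2.1 k (by omega) r
  have h2 := hP.2.1 (k+1) (by omega) r
  unfold loT
  cases r with
  | zero => simp only [hiT]; omega
  | succ r =>
    have h3 := hP.2.1 k (by omega) r
    simp only [hiT]; omega

lemma tog_le (hP : P ∈ GT n μ) (hk : k + 1 < n) (r : ℕ) (h : P (k+1) r ≤ c) :
    tog c k P (k+1) r + P (k+1) r = hiT P c k r + loT P c k r ∧ tog c k P (k+1) r ≤ c ∧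
      loT P c k r ≤ tog c k P (k+1) r ∧ tog c k P (k+1) r ≤ hiT P c k r := by
  have := bounds (c := c) hP hk r
  unfold tog
  rw [if_pos ⟨rfl, h⟩]
  omega

lemma tog_gt (r : ℕ) (h : c < P (k+1) r) : tog c k P (k+1) r = P (k+1) r := by
  unfold tog; rw [if_neg (by omega)]

lemma tog_tog (hP : P ∈ GT n μ) (hk : k + 1 < n) : tog c k (tog c k P) = P := by
  funext m r
  by_cases hm : m = k + 1
  · subst hm
    by_cases h : P (k+1) r ≤ c
    · have := tog_le hP hk r h
      have e : tog c k (tog c k P) (k+1) r = hiT (tog c k P) c k r + loT (tog c k P) c k r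
        - tog c k P (k+1) r := by
        generalize tog c k P = Q at this ⊢
        unfold tog
        rw [if_pos ⟨rfl, this.2.1⟩]
      rw [e, hiT_tog, loT_tog]
      omega
    · have := tog_gt (c := c) (k := k) (P := P) r (by omega)
      rw [tog_gt _ (by omega), this]
  · rw [tog_ne _ _ hm, tog_ne _ _ hm]

lemma tog_mem (hP : P ∈ GT n μ) (hk : k + 1 < n) (hc : ∀ r, ¬ (P k r ≤ c ∧ c < P (k+1) r)) :
    tog c k P ∈ GT n μ := by
  have key : ∀ r, P (k+1+1) (r+1) ≤ tog c k P (k+1) r ∧ P k r ≤ tog c k P (k+1) r ∧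
      tog c k P (k+1) r ≤ P (k+1+1) r ∧ tog c k P (k+1) (r+1) ≤ P k r := by
    intro r
    have h1 := hP.2.1 k (by omega) r
    have h2 := hP.2.1 (k+1) (by omega) r
    have h3 := hP.2.1 (k+1) (by omega) (r+1)
    have hcr := hc r
    have a1 : P (k+1+1) (r+1) ≤ tog c k P (k+1) r ∧ P k r ≤ tog c k P (k+1) r := by
      by_cases h : P (k+1) r ≤ c
      · have := tog_le hP hk r h
        simp only [loT] at this
        omega
      · rw [tog_gt r (by omega)]; omega
    have a2 : tog c k P (k+1) r ≤ P (k+1+1) r := by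
      by_cases h : P (k+1) r ≤ c
      · have := tog_le hP hk r h
        cases r <;> simp only [hiT] at this <;> omega
      · rw [tog_gt r (by omega)]; omega
    have a3 : tog c k P (k+1) (r+1) ≤ P k r := by
      by_cases h : P (k+1) (r+1) ≤ c
      · have := tog_le hP hk (r+1) h
        simp only [hiT] at this
        omega
      · rw [tog_gt _ (by omega)]; omega
    exact ⟨a1.1, a1.2, a2, a3⟩
  refine ⟨fun r => ?_, fun m hm r => ?_, fun m hm r => ?_⟩
  · rw [tog_ne _ _ (by omega)]; exact hP.1 r
  · have := key r
    by_cases h1 : m = k + 1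
    · subst h1
      rw [tog_ne (k+1+1) _ (by omega), tog_ne (k+1+1) _ (by omega)]
      exact ⟨this.1, this.2.2.1⟩
    · by_cases h2 : m = k
      · subst h2
        rw [tog_ne m _ (by omega)]
        exact ⟨this.2.2.2, this.2.1⟩
      · rw [tog_ne m _ (by omega), tog_ne (m+1) _ (by omega), tog_ne (m+1) _ (by omega)]
        exact hP.2.1 m hm r
  · rw [tog_ne _ _ (by omega)]; exact hP.2.2 m hm r

lemma tog_sub (hP : P ∈ GT n μ) (hk : k + 1 < n) (c' : ℕ) (hc' : c ≤ c') (m r : ℕ) :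
    tog c k P m r - c' = P m r - c' := by
  by_cases hm : m = k + 1
  · subst hm
    by_cases h : P (k+1) r ≤ c
    · have := tog_le hP hk r h
      omega
    · rw [tog_gt r (by omega)]
  · rw [tog_ne _ _ hm]

lemma wtc_tog (hP : P ∈ GT n μ) (hk : k + 1 < n) (c' : ℕ) (hc' : c ≤ c') (m : ℕ) :
    wtc n (tog c k P) c' m = wtc n P c' m := by
  unfold wtc
  apply Finset.sum_congr rfl
  intro r _
  rw [tog_sub hP hk c' hc', tog_sub hP hk c' hc']

lemma vc_tog_ne (m : ℕ) (hm : m ≠ k + 1) : vc n (tog c k P) c m = vc n P c m := by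
  unfold vc
  apply Finset.sum_congr rfl
  intro r _
  rw [tog_ne _ _ hm]

lemma vc_tog (hP : P ∈ GT n μ) (hk : k + 1 < n) (hc : ∀ r, ¬ (P k r ≤ c ∧ c < P (k+1) r)) :
    vc n (tog c k P) c (k+1) + vc n P c (k+1) = vc n P c k + vc n P c (k+1+1) := by
  have h1 : vc n (tog c k P) c (k+1) + vc n P c (k+1) =
      ∑ r ∈ Finset.range n, (hiT P c k r + loT P c k r) := by
    unfold vc
    rw [← Finset.sum_add_distrib]
    apply Finset.sum_congr rfl
    intro r _
    have hb := bounds (c := c) hP hk r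
    by_cases h : P (k+1) r ≤ c
    · have := tog_le hP hk r h
      omega
    · rw [tog_gt r (by omega)]
      have h2 := hc r
      have : loT P c k r = c := by unfold loT at *; omega
      omega
  have h2 : ∀ N, ∑ r ∈ Finset.range N, (hiT P c k r + loT P c k r) + hiT P c k N =
      ∑ r ∈ Finset.range N, min (P k r) c + ∑ r ∈ Finset.range (N+1), min (P (k+1+1) r) c := by
    intro N
    induction N with
    | zero => simp [hiT]
    | succ N ih =>
      rw [Finset.sum_range_succ, Finset.sum_range_succ _ N, Finset.sum_range_succ _ (N+1)]
      have : loT P c k N + hiT P c k (N+1) = min (P k N) c + min (P (k+1+1) (N+1)) c := by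
        simp only [hiT, loT]; omega
      omega
  have h3 := h2 n
  have h4 : hiT P c k n = 0 := by
    obtain ⟨n', rfl⟩ : ∃ n', n = n' + 1 := ⟨n - 1, by omega⟩
    have := GT.vanish' hP (k+1+1) (n'+1) le_rfl
    simp only [hiT]; omega
  rw [Finset.sum_range_succ, GT.vanish' hP (k+1+1) n le_rfl] at h3
  rw [h1]
  unfold vc
  omega

lemma wt_tog (hP : P ∈ GT n μ) (hk : k + 1 < n) (hc : ∀ r, ¬ (P k r ≤ c ∧ c < P (k+1) r)) :
    wt n (tog c k P) k + wtc n P c (k+1) = wt n P (k+1) + wtc n P c k ∧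
    wt n (tog c k P) (k+1) + wtc n P c k = wt n P k + wtc n P c (k+1) ∧
    ∀ m, m ≠ k → m ≠ k + 1 → wt n (tog c k P) m = wt n P m := by
  have hT := tog_mem hP hk hc
  have e1 := wtc_add_vc hT c k
  have e2 := wtc_add_vc hT c (k+1)
  have e3 := wtc_add_vc hP c k
  have e4 := wtc_add_vc hP c (k+1)
  have e5 := vc_tog hP hk hc
  rw [wtc_tog hP hk c le_rfl] at e1 e2
  rw [vc_tog_ne k (by omega)] at e1
  rw [vc_tog_ne (k+1+1) (by omega)] at e2
  refine ⟨by omega, by omega, fun m h1 h2 => ?_⟩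
  unfold wt wtc
  apply Finset.sum_congr rfl
  intro r _
  rw [tog_ne _ _ (by omega), tog_ne _ _ (by omega)]

end toglemmas

/-! ### Schur polynomials from patterns, symmetry, alternants -/

section alt
variable {R : Type*} [CommRing R]

/-- Schur polynomial, as a sum over patterns, evaluated at `x`. -/
noncomputable def gtS (n : ℕ) (μ : ℕ → ℕ) (x : Fin n → R) : R :=
  ∑ P ∈ (GT.finite n μ).toFinset, ∏ i : Fin n, x i ^ wt n P i

/-- Alternant `det (x_i ^ α_j)`. -/
noncomputable def alt (n : ℕ) (x : Fin n → R) (α : ℕ → ℕ) : R :=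
  (Matrix.of fun i j : Fin n => x i ^ α j).det

lemma alt_congr {n : ℕ} (x : Fin n → R) {α β : ℕ → ℕ} (h : ∀ i, i < n → α i = β i) :
    alt n x α = alt n x β := by
  unfold alt
  congr 1
  ext i j
  simp [h j j.2]

lemma alt_swap {n : ℕ} (x : Fin n → R) {α β : ℕ → ℕ} (k : ℕ) (hk : k + 1 < n)
    (h1 : β k = α (k+1)) (h2 : β (k+1) = α k)
    (h : ∀ i, i < n → i ≠ k → i ≠ k + 1 → β i = α i) :
    alt n x β = - alt n x α := by
  unfold alt
  have := Matrix.det_permute' (Equiv.swap (⟨k, by omega⟩ : Fin n) ⟨k+1, hk⟩)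
    (Matrix.of fun i j : Fin n => x i ^ α j)
  rw [Equiv.Perm.sign_swap (by simp)] at this
  have e : (Matrix.of fun i j : Fin n => x i ^ β j) =
    (Matrix.of fun i j : Fin n => x i ^ α j).submatrix id
      (Equiv.swap (⟨k, by omega⟩ : Fin n) ⟨k+1, hk⟩) := by
    ext i j
    simp only [Matrix.of_apply, Matrix.submatrix_apply, id]
    congr 1
    by_cases a : j = ⟨k, by omega⟩
    · subst a; rw [Equiv.swap_apply_left]; exact h1
    · by_cases b : j = ⟨k+1, hk⟩
      · subst b; rw [Equiv.swap_apply_right]; exact h2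
      · rw [Equiv.swap_apply_of_ne_of_ne a b]
        exact h j j.2 (fun h => a (Fin.ext h)) (fun h => b (Fin.ext h))
  rw [e, this]
  simp

lemma gtS_swap {n : ℕ} {μ : ℕ → ℕ} {b : ℕ} (hb : ∀ r, μ r ≤ b) (x : Fin n → R)
    (k : ℕ) (hk : k + 1 < n) :
    gtS n μ (fun i => x (Equiv.swap (⟨k, by omega⟩ : Fin n) ⟨k+1, hk⟩ i)) = gtS n μ x := by
  unfold gtS
  have hc : ∀ P ∈ GT n μ, ∀ r, ¬ (P k r ≤ b ∧ b < P (k+1) r) := by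
    intro P hP r
    have := GT.le_top hP (k+1) r
    have := hb r
    omega
  refine Finset.sum_nbij' (tog b k) (tog b k) ?_ ?_ ?_ ?_ ?_
  · intro P hP
    rw [Set.Finite.mem_toFinset] at *
    exact tog_mem hP hk (hc P hP)
  · intro P hP
    rw [Set.Finite.mem_toFinset] at *
    exact tog_mem hP hk (hc P hP)
  · intro P hP
    rw [Set.Finite.mem_toFinset] at *
    exact tog_tog hP hk
  · intro P hP
    rw [Set.Finite.mem_toFinset] at *
    exact tog_tog hP hk
  · intro P hP
    rw [Set.Finite.mem_toFinset] at *
    have hw := wt_tog hP hk (hc P hP)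
    rw [wtc_large hP b _ hb, wtc_large hP b _ hb] at hw
    rw [← Equiv.prod_comp (Equiv.swap (⟨k, by omega⟩ : Fin n) ⟨k+1, hk⟩)
      (fun i : Fin n => x i ^ wt n (tog b k P) i)]
    apply Finset.prod_congr rfl
    intro j _
    congr 1
    by_cases a : j = ⟨k, by omega⟩
    · subst a; rw [Equiv.swap_apply_left]; simp only; omega
    · by_cases b : j = ⟨k+1, hk⟩
      · subst b; rw [Equiv.swap_apply_right]; simp only; omega
      · rw [Equiv.swap_apply_of_ne_of_ne a b]
        exact (hw.2.2 j (fun h => a (Fin.ext h)) (fun h => b (Fin.ext h))).symm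

lemma gtS_perm {n : ℕ} {μ : ℕ → ℕ} {b : ℕ} (hb : ∀ r, μ r ≤ b)
    (σ : Equiv.Perm (Fin n)) : ∀ (x : Fin n → R), gtS n μ (fun i => x (σ i)) = gtS n μ x := by
  cases n with
  | zero =>
    intro x
    congr 1
    funext i
    exact i.elim0
  | succ n =>
    have hσ : σ ∈ Submonoid.closure (Set.range fun i : Fin n ↦ Equiv.swap i.castSucc i.succ) := by
      rw [Equiv.Perm.mclosure_swap_castSucc_succ]; trivial
    induction hσ using Submonoid.closure_induction with
    | mem τ h =>
      obtain ⟨i, rfl⟩ := h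
      intro x
      exact gtS_swap hb x i (by omega)
    | one => intro x; rfl
    | mul a c _ _ ha hc =>
      intro x
      have := hc (fun i => x (a i))
      rw [ha] at this
      exact this

lemma alt_mul_gtS {n : ℕ} {μ : ℕ → ℕ} {b : ℕ} (hb : ∀ r, μ r ≤ b) (x : Fin n → R)
    (β : ℕ → ℕ) :
    alt n x β * gtS n μ x =
      ∑ P ∈ (GT.finite n μ).toFinset, alt n x (fun i => β i + wt n P i) := by
  unfold alt
  simp only [Matrix.det_apply]
  rw [Finset.sum_comm, Finset.sum_mul]
  apply Finset.sum_congr rfl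
  intro σ _
  rw [← gtS_perm hb σ x]
  unfold gtS
  rw [smul_mul_assoc, Finset.mul_sum, Finset.smul_sum]
  apply Finset.sum_congr rfl
  intro P _
  congr 1
  rw [← Finset.prod_mul_distrib]
  apply Finset.prod_congr rfl
  intro i _
  simp [pow_add]

/-- violation of the partition condition at column `c`, row `k`. -/
def Bad (n : ℕ) (l : ℕ → ℕ) (P : ℕ → ℕ → ℕ) (c k : ℕ) : Prop :=
  k + 1 < n ∧ l k + wtc n P c k < l (k+1) + wtc n P c (k+1)

/-- the selected violation -/
def Sel (n : ℕ) (l : ℕ → ℕ) (P : ℕ → ℕ → ℕ) (p : ℕ × ℕ) : Prop :=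
  Bad n l P p.1 p.2 ∧ (∀ c' k', p.1 < c' → ¬ Bad n l P c' k') ∧
    (∀ k', k' < p.2 → ¬ Bad n l P p.1 k')

lemma Sel.unique {n : ℕ} {l : ℕ → ℕ} {P : ℕ → ℕ → ℕ} {p q : ℕ × ℕ} (hp : Sel n l P p)
    (hq : Sel n l P q) : p = q := by
  obtain ⟨p1, p2⟩ := p
  obtain ⟨q1, q2⟩ := q
  obtain ⟨a1, a2, a3⟩ := hp
  obtain ⟨b1, b2, b3⟩ := hq
  simp only at *
  have h1 : p1 = q1 := by
    rcases lt_trichotomy p1 q1 with h | h | h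
    · exact absurd b1 (a2 _ _ h)
    · exact h
    · exact absurd a1 (b2 _ _ h)
  subst h1
  have h2 : p2 = q2 := by
    rcases lt_trichotomy p2 q2 with h | h | h
    · exact absurd a1 (b3 _ h)
    · exact h
    · exact absurd b1 (a3 _ h)
  rw [h2]

lemma Sel.exists {n : ℕ} {l μ : ℕ → ℕ} {P : ℕ → ℕ → ℕ} {b : ℕ} (hb : ∀ r, μ r ≤ b)
    (hl : ∀ i, i + 1 < n → l (i+1) ≤ l i) (hP : P ∈ GT n μ)
    (h : ∃ c k, Bad n l P c k) : ∃ p, Sel n l P p := by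
  classical
  have hbd : ∀ c k, Bad n l P c k → c ≤ b := by
    rintro c k ⟨h1, h2⟩
    by_contra hc
    rw [wtc_large hP c _ (fun r => (hb r).trans (by omega)),
      wtc_large hP c _ (fun r => (hb r).trans (by omega))] at h2
    have := hl k h1
    omega
  obtain ⟨c0, k0, h0⟩ := h
  have hc : ∃ k, Bad n l P (Nat.findGreatest (fun c => ∃ k, Bad n l P c k) b) k :=
    Nat.findGreatest_spec (P := fun c => ∃ k, Bad n l P c k) (hbd _ _ h0) ⟨k0, h0⟩
  refine ⟨(Nat.findGreatest (fun c => ∃ k, Bad n l P c k) b, Nat.find hc), Nat.find_spec hc,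
    ?_, fun k' hk' => Nat.find_min hc hk'⟩
  intro c' k' hlt hbad
  exact Nat.findGreatest_is_greatest (P := fun c => ∃ k, Bad n l P c k) hlt (hbd _ _ hbad)
    ⟨k', hbad⟩

lemma Sel.facts {n : ℕ} {l μ : ℕ → ℕ} {P : ℕ → ℕ → ℕ} (hP : P ∈ GT n μ) {p : ℕ × ℕ}
    (h : Sel n l P p) : p.2 + 1 < n ∧
      (∀ r, ¬ (P p.2 r ≤ p.1 ∧ p.1 < P (p.2+1) r)) ∧
      l p.2 + wtc n P p.1 p.2 + 1 = l (p.2+1) + wtc n P p.1 (p.2+1) := by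
  obtain ⟨⟨h1, h2⟩, h3, -⟩ := h
  have h4 := h3 (p.1+1) p.2 (by omega)
  unfold Bad at h4
  have e1 := wtc_succ_le p.1 p.2 hP
  have e2 := wtc_le_succ p.1 (p.2+1) h1 hP
  refine ⟨h1, wtc_eq_succ p.1 p.2 hP ?_, ?_⟩ <;> omega

lemma Sel.tog {n : ℕ} {l μ : ℕ → ℕ} {P : ℕ → ℕ → ℕ} (hP : P ∈ GT n μ) {p : ℕ × ℕ}
    (h : Sel n l P p) : Sel n l (tog p.1 p.2 P) p := by
  have hk := h.1.1
  have e : ∀ c' k', p.1 ≤ c' → (Bad n l (_root_.tog p.1 p.2 P) c' k' ↔ Bad n l P c' k') := by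
    intro c' k' hc
    unfold Bad
    rw [wtc_tog hP hk c' hc, wtc_tog hP hk c' hc]
  refine ⟨(e _ _ le_rfl).2 h.1, fun c' k' hc => ?_, fun k' hk' => ?_⟩
  · rw [e _ _ hc.le]; exact h.2.1 c' k' hc
  · rw [e _ _ le_rfl]; exact h.2.2 k' hk'
    done

/-- the Littlewood–Richardson patterns -/
def Good (n : ℕ) (l : ℕ → ℕ) (P : ℕ → ℕ → ℕ) : Prop := ∀ c k, ¬ Bad n l P c k

open Classical in
/-- the sign reversing involution -/
noncomputable def inv (n : ℕ) (l : ℕ → ℕ) (P : ℕ → ℕ → ℕ) : ℕ → ℕ → ℕ :=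
  if h : ∃ p, Sel n l P p then tog h.choose.1 h.choose.2 P else P

lemma inv_eq {n : ℕ} {l : ℕ → ℕ} {P : ℕ → ℕ → ℕ} {p : ℕ × ℕ} (h : Sel n l P p) :
    inv n l P = tog p.1 p.2 P := by
  have h' : ∃ p, Sel n l P p := ⟨p, h⟩
  unfold inv
  rw [dif_pos h', Sel.unique h'.choose_spec h]

open Classical in
lemma LR [IsDomain R] [CharZero R] {n : ℕ} {l μ : ℕ → ℕ} {b : ℕ} (hb : ∀ r, μ r ≤ b)
    (hl : ∀ i, i + 1 < n → l (i+1) ≤ l i) (x : Fin n → R) :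
    alt n x (fun i => l i + (n - 1 - i)) * gtS n μ x =
      ∑ P ∈ (GT.finite n μ).toFinset with Good n l P,
        alt n x (fun i => l i + wt n P i + (n - 1 - i)) := by
  rw [alt_mul_gtS hb, ← Finset.sum_filter_add_sum_filter_not _ (Good n l)]
  have hz : ∑ P ∈ (GT.finite n μ).toFinset with ¬ Good n l P,
      alt n x (fun i => l i + (n - 1 - i) + wt n P i) = 0 := by
    have hS : ∀ P ∈ (GT.finite n μ).toFinset.filter (fun P => ¬ Good n l P),
        P ∈ GT n μ ∧ ∃ p, Sel n l P p := by
      intro P hP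
      rw [Finset.mem_filter, Set.Finite.mem_toFinset] at hP
      refine ⟨hP.1, Sel.exists hb hl hP.1 ?_⟩
      have := hP.2
      unfold Good at this
      push Not at this
      exact this
    have hneg : ∀ P ∈ (GT.finite n μ).toFinset.filter (fun P => ¬ Good n l P),
        alt n x (fun i => l i + (n - 1 - i) + wt n (inv n l P) i) =
        - alt n x (fun i => l i + (n - 1 - i) + wt n P i) := by
      intro P hP
      obtain ⟨hG, p, hp⟩ := hS P hP
      obtain ⟨f1, f2, f3⟩ := hp.facts hG
      have hw := wt_tog hG f1 f2
      rw [inv_eq hp]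
      apply alt_swap x p.2 f1
      · omega
      · omega
      · intro i _ h1 h2
        rw [hw.2.2 i h1 h2]
    refine Finset.sum_involution (fun P _ => inv n l P) ?_ ?_ ?_ ?_
    · intro P hP
      rw [hneg P hP]; ring
    · intro P hP hne heq
      have := hneg P hP
      rw [heq] at this
      exact hne (self_eq_neg.1 this)
    · intro P hP
      obtain ⟨hG, p, hp⟩ := hS P hP
      obtain ⟨f1, f2, f3⟩ := hp.facts hG
      rw [Finset.mem_filter, Set.Finite.mem_toFinset, inv_eq hp]
      refine ⟨tog_mem hG f1 f2, fun hgood => ?_⟩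
      exact hgood _ _ (Sel.tog hG hp).1
    · intro P hP
      obtain ⟨hG, p, hp⟩ := hS P hP
      obtain ⟨f1, f2, f3⟩ := hp.facts hG
      rw [inv_eq hp, inv_eq (Sel.tog hG hp), tog_tog hG f1]
  rw [hz, add_zero]
  apply Finset.sum_congr rfl
  intro P _
  apply alt_congr
  intro i _
  omega

/-- The unique pattern of weight `μ` -/
def topP (n : ℕ) (μ : ℕ → ℕ) : ℕ → ℕ → ℕ := fun m r => if r < m ∨ n ≤ m then μ r else 0

lemma good_zero {n : ℕ} {μ : ℕ → ℕ} {P : ℕ → ℕ → ℕ} (hP : P ∈ GT n μ)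
    (hg : Good n (fun _ => 0) P) : ∀ r, ∀ m, r < m → P m r = μ r := by
  intro r
  induction r using Nat.strong_induction_on with
  | _ r ih =>
    have hle := GT.le_top hP
    by_cases hrn : n ≤ r
    · intro m hm; exact hP.2.2 m (by omega) r
    have hmain : P (r+1) r = μ r := by
      by_contra hne
      have hlt : P (r+1) r < μ r := lt_of_le_of_ne (hle _ _) hne
      set c := P (r+1) r with hcdef
      have h0 : wtc n P c r = 0 := by
        unfold wtc
        apply Finset.sum_eq_zero
        intro r' _
        rcases lt_trichotomy r' r with h | h | h
        · rw [ih r' h _ (by omega), ih r' h _ h]; omega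
        · subst h; omega
        · rw [GT.vanish hP (r+1) (by omega) r' (by omega)]; omega
      have h1 : ∀ d, r + d < n → wtc n P c (r + d) = 0 := by
        intro d
        induction d with
        | zero => intro _; exact h0
        | succ d ihd =>
          intro hd
          have := ihd (by omega)
          have hb := hg c (r+d)
          unfold Bad at hb
          simp only [zero_add] at hb
          rw [← Nat.add_assoc]
          omega
      have h2 : ∀ m, r < m → P m r ≤ c := by
        intro m hm
        obtain ⟨d, rfl⟩ : ∃ d, m = r + 1 + d := ⟨m - r - 1, by omega⟩
        clear hm
        induction d with
        | zero => exact le_rfl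
        | succ d ihd =>
          by_cases hn : r + (d + 1) < n
          · have h3 := h1 (d+1) hn
            unfold wtc at h3
            rw [Finset.sum_eq_zero_iff] at h3
            have := h3 r (Finset.mem_range.2 (by omega))
            have e : r + (d+1) = r + 1 + d := by ring
            rw [e] at this
            rw [← Nat.add_assoc]
            omega
          · have e1 := hP.2.2 (r + 1 + d) (by omega) r
            have e2 := hP.2.2 (r + 1 + (d+1)) (by omega) r
            omega
      have h3 := h2 n (by omega)
      rw [hP.2.2 n le_rfl] at h3
      omega
    intro m hm
    have h1 := GT.monotone hP r (show r + 1 ≤ m by omega)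
    simp only at h1
    have := hle m r
    omega

lemma topP_mem {n : ℕ} {μ : ℕ → ℕ} (hμ : ∀ i, μ (i+1) ≤ μ i) (h0 : ∀ i, n ≤ i → μ i = 0) :
    topP n μ ∈ GT n μ := by
  refine ⟨fun r => ?_, fun m hm r => ?_, fun m hm r => ?_⟩
  · unfold topP; split_ifs with h
    · exact h0 r (by omega)
    · rfl
  · have := hμ r
    have h1 := h0 r
    have h2 := h0 (r+1)
    unfold topP; split_ifs <;> omega
  · unfold topP; rw [if_pos (by omega)]

lemma wtc_topP {n : ℕ} {μ : ℕ → ℕ} (h0 : ∀ i, n ≤ i → μ i = 0) (c m : ℕ) (hm : m < n) :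
    wtc n (topP n μ) c m = μ m - c := by
  unfold wtc
  rw [Finset.sum_eq_single m]
  · unfold topP; rw [if_pos (by omega), if_neg (by omega)]; omega
  · intro r hr hne
    have := h0 r
    rw [Finset.mem_range] at hr
    unfold topP; split_ifs <;> omega
  · intro h; exact absurd (Finset.mem_range.2 hm) h

lemma bialternant [IsDomain R] [CharZero R] {n : ℕ} {μ : ℕ → ℕ} (hμ : ∀ i, μ (i+1) ≤ μ i)
    (h0 : ∀ i, n ≤ i → μ i = 0) (x : Fin n → R) :
    alt n x (fun i => n - 1 - i) * gtS n μ x = alt n x (fun i => μ i + (n - 1 - i)) := by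
  classical
  have hb : ∀ r, μ r ≤ μ 0 := fun r => antitone_nat_of_succ_le hμ (Nat.zero_le r)
  have h := LR (R := R) (l := fun _ => 0) hb (fun _ _ => le_rfl) x
  have e : (GT.finite n μ).toFinset.filter (fun P => Good n (fun _ => 0) P) = {topP n μ} := by
    ext P
    rw [Finset.mem_filter, Set.Finite.mem_toFinset, Finset.mem_singleton]
    constructor
    · rintro ⟨hP, hg⟩
      funext m r
      have h1 := good_zero hP hg r m
      unfold topP
      split_ifs with hc
      · rcases hc with hc | hc
        · exact h1 hc
        · exact hP.2.2 m hc r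
      · exact GT.vanish hP m (by omega) r (by omega)
    · rintro rfl
      refine ⟨topP_mem hμ h0, fun c k hbad => ?_⟩
      obtain ⟨h1, h2⟩ := hbad
      rw [wtc_topP h0 _ _ (by omega), wtc_topP h0 _ _ h1] at h2
      have := hμ k
      simp only [zero_add] at h2
      omega
  rw [e, Finset.sum_singleton] at h
  simp only [zero_add] at h
  rw [h]
  apply alt_congr
  intro i hi
  unfold wt
  rw [wtc_topP h0 _ _ hi]
  omega

end alt

/-! ### Tableaux and patterns -/

/-- row lengths as a function on all of `ℕ` -/
def shp (k : ℕ) (lam : ℕ → ℤ) (r : ℕ) : ℕ := if r < k then (lam r).toNat else 0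

lemma shp_lt {k : ℕ} {lam : ℕ → ℤ} {r j : ℕ} : j < shp k lam r ↔ r < k ∧ (j : ℤ) < lam r := by
  unfold shp; split_ifs with h
  · simp [h]
  · simp [h]

lemma shp_anti {k : ℕ} {lam : ℕ → ℤ} (h : IsPartitionSeq k lam) (i : ℕ) :
    shp k lam (i+1) ≤ shp k lam i := by
  have := h.1 i
  unfold shp
  split_ifs <;> omega

lemma shp_zero {k n : ℕ} {lam : ℕ → ℤ} (h : IsPartitionSeq k lam) (hn : n < k → lam n ≤ 0)
    (i : ℕ) (hi : n ≤ i) : shp k lam i = 0 := by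
  have h1 : shp k lam n = 0 := by unfold shp; split_ifs <;> omega
  have := antitone_nat_of_succ_le (shp_anti h) hi
  omega

/-- pattern of a tableau -/
def toP {k : ℕ} {lam : ℕ → ℤ} {n : ℕ} (T : SSYT k lam 1 n) : ℕ → ℕ → ℕ := fun m r =>
  ((Finset.range (shp k lam r)).filter (fun j => T.entry r j ≤ m)).card

lemma toP_iff {k : ℕ} {lam : ℕ → ℤ} {n : ℕ} (T : SSYT k lam 1 n) (m r j : ℕ) :
    j < toP T m r ↔ j < shp k lam r ∧ T.entry r j ≤ m := by
  unfold toP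
  constructor
  · intro h
    have hj : j < shp k lam r := by
      refine h.trans_le ((Finset.card_filter_le _ _).trans ?_)
      simp
    refine ⟨hj, ?_⟩
    by_contra hne
    have : (Finset.range (shp k lam r)).filter (fun j => T.entry r j ≤ m) ⊆ Finset.range j := by
      intro j' hj'
      rw [Finset.mem_filter, Finset.mem_range] at hj'
      rw [Finset.mem_range]
      by_contra hle
      have h1 := shp_lt.1 hj'.1
      have := T.row_weak r j j' h1.1 (by omega) h1.2
      omega
    have := Finset.card_le_card this
    rw [Finset.card_range] at this
    omega
  · rintro ⟨h1, h2⟩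
    have : Finset.range (j+1) ⊆
        (Finset.range (shp k lam r)).filter (fun j => T.entry r j ≤ m) := by
      intro j' hj'
      rw [Finset.mem_range] at hj'
      rw [Finset.mem_filter, Finset.mem_range]
      have h3 := shp_lt.1 h1
      have := T.row_weak r j' j h3.1 (by omega) h3.2
      omega
    have := Finset.card_le_card this
    rw [Finset.card_range] at this
    omega

lemma toP_mem {k : ℕ} {lam : ℕ → ℤ} {n : ℕ} (h : IsPartitionSeq k lam) (T : SSYT k lam 1 n) :
    toP T ∈ GT n (shp k lam) := by
  refine ⟨fun r => ?_, fun m _ r => ⟨?_, ?_⟩, fun m hm r => ?_⟩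
  · by_contra hne
    have h1 := (toP_iff T 0 r 0).1 (by omega)
    have h2 := shp_lt.1 h1.1
    have := T.lower r 0 h2.1 h2.2
    omega
  · apply le_of_forall_lt
    intro j hj
    rw [toP_iff] at *
    have h2 := shp_lt.1 hj.1
    have := T.col_strict r (r+1) j (by omega) h2.1 h2.2
    have := shp_anti h r
    omega
  · apply le_of_forall_lt
    intro j hj
    rw [toP_iff] at *
    omega
  · apply le_antisymm
    · apply le_of_forall_lt
      intro j hj
      rw [toP_iff] at hj
      exact hj.1
    · apply le_of_forall_lt
      intro j hj
      rw [toP_iff]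
      have h2 := shp_lt.1 hj
      have := T.upper r j h2.1 h2.2
      omega

/-- entries of the tableau of a pattern -/
def ofPentry (n : ℕ) (μ : ℕ → ℕ) (P : ℕ → ℕ → ℕ) (r j : ℕ) : ℕ :=
  if j < μ r then ((Finset.range n).filter (fun m => P m r ≤ j)).card else 0

lemma ofPentry_iff {n : ℕ} {μ : ℕ → ℕ} {P : ℕ → ℕ → ℕ} (hP : P ∈ GT n μ) {r j : ℕ}
    (hj : j < μ r) (m : ℕ) : ofPentry n μ P r j ≤ m ↔ j < P m r := by
  unfold ofPentry
  rw [if_pos hj]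
  constructor
  · intro h
    by_contra hne
    have hm : m < n := by
      by_contra hm
      rw [hP.2.2 m (by omega)] at hne
      omega
    have : Finset.range (m+1) ⊆ (Finset.range n).filter (fun m => P m r ≤ j) := by
      intro m' hm'
      rw [Finset.mem_range] at hm'
      rw [Finset.mem_filter, Finset.mem_range]
      have := GT.monotone hP r (show m' ≤ m by omega)
      simp only at this
      omega
    have := Finset.card_le_card this
    rw [Finset.card_range] at this
    omega
  · intro h
    have : (Finset.range n).filter (fun m => P m r ≤ j) ⊆ Finset.range m := by
      intro m' hm'
      rw [Finset.mem_filter, Finset.mem_range] at hm'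
      rw [Finset.mem_range]
      by_contra hle
      have := GT.monotone hP r (show m ≤ m' by omega)
      simp only at this
      omega
    have := Finset.card_le_card this
    rwa [Finset.card_range] at this

/-- tableau of a pattern -/
def ofP {k : ℕ} {lam : ℕ → ℤ} {n : ℕ} (h : IsPartitionSeq k lam) (P : ℕ → ℕ → ℕ)
    (hP : P ∈ GT n (shp k lam)) : SSYT k lam 1 n where
  entry := ofPentry n (shp k lam) P
  zero_outside := by
    intro i j hn
    unfold ofPentry
    rw [if_neg]
    rwa [shp_lt]
  lower := by
    intro i j hi hj
    have h1 := shp_lt.2 ⟨hi, hj⟩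
    by_contra hne
    have := (ofPentry_iff hP h1 0).1 (by omega)
    rw [hP.1] at this
    omega
  upper := by
    intro i j hi hj
    have h1 := shp_lt.2 ⟨hi, hj⟩
    rw [ofPentry_iff hP h1, hP.2.2 n le_rfl]
    exact h1
  row_weak := by
    intro i j j' hi hj hj'
    have h1 := shp_lt.2 ⟨hi, hj'⟩
    rw [ofPentry_iff hP (by omega)]
    have := (ofPentry_iff hP h1 _).1 le_rfl
    omega
  col_strict := by
    have step : ∀ i j, j < shp k lam (i+1) →
        ofPentry n (shp k lam) P i j < ofPentry n (shp k lam) P (i+1) j := by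
      intro i j hj
      have hj0 : j < shp k lam i := hj.trans_le (shp_anti h i)
      have h1 := (ofPentry_iff hP hj _).1 le_rfl
      have hpos : ofPentry n (shp k lam) P (i+1) j ≠ 0 := by
        intro h0
        rw [h0, hP.1] at h1
        omega
      have hle : ofPentry n (shp k lam) P (i+1) j ≤ n := by
        rw [ofPentry_iff hP hj, hP.2.2 n le_rfl]
        exact hj
      obtain ⟨e, he⟩ : ∃ e, ofPentry n (shp k lam) P (i+1) j = e + 1 :=
        ⟨_ - 1, (Nat.succ_pred_eq_of_ne_zero hpos).symm⟩
      rw [he] at h1 hle ⊢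
      have h2 := (hP.2.1 e (by omega) i).1
      have := (ofPentry_iff hP hj0 e).2 (by omega)
      omega
    intro i i' j hi hi' hj
    have h1 := shp_lt.2 ⟨hi', hj⟩
    clear hi' hj
    induction i', hi using Nat.le_induction with
    | base => exact step i j h1
    | succ i' _ ih => exact (ih (h1.trans_le (shp_anti h i'))).trans (step i' j h1)

lemma SSYT.ext' {k : ℕ} {lam : ℕ → ℤ} {a b : ℕ} {T T' : SSYT k lam a b}
    (h : T.entry = T'.entry) : T = T' := by
  cases T; cases T'; simp only at h; subst h; rfl

/-- tableaux are patterns -/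
def ssytEquiv {k : ℕ} {lam : ℕ → ℤ} {n : ℕ} (h : IsPartitionSeq k lam) :
    SSYT k lam 1 n ≃ GT n (shp k lam) where
  toFun T := ⟨toP T, toP_mem h T⟩
  invFun P := ofP h P.1 P.2
  left_inv T := by
    apply SSYT.ext'
    funext r j
    by_cases hj : j < shp k lam r
    · apply eq_of_forall_ge_iff
      intro m
      change ofPentry n (shp k lam) (toP T) r j ≤ m ↔ _
      rw [ofPentry_iff (toP_mem h T) hj, toP_iff]
      tauto
    · rw [SSYT.zero_outside _ r j (by rwa [← shp_lt]),
        SSYT.zero_outside _ r j (by rwa [← shp_lt])]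
  right_inv P := by
    apply Subtype.ext
    funext m r
    apply eq_of_forall_lt_iff
    intro j
    change j < toP (ofP h P.1 P.2) m r ↔ _
    rw [toP_iff]
    constructor
    · rintro ⟨h1, h2⟩
      exact (ofPentry_iff P.2 h1 m).1 h2
    · intro h1
      have h2 : j < shp k lam r := h1.trans_le (GT.le_top P.2 m r)
      exact ⟨h2, (ofPentry_iff P.2 h2 m).2 h1⟩

/-- the variables `x_1, …, x_n` -/
noncomputable def xx (n : ℕ) : Fin n → MvPolynomial ℕ ℤ := fun i => MvPolynomial.X (i + 1)

lemma weight_eq {k : ℕ} {lam : ℕ → ℤ} {n : ℕ} (h : IsPartitionSeq k lam)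
    (hn : n < k → lam n ≤ 0) (T : SSYT k lam 1 n) :
    T.weight = ∏ i : Fin n, xx n i ^ wt n (toP T) i := by
  have hP := toP_mem h T
  have hrow : ∀ r M, ∏ j ∈ Finset.range (toP T M r), (MvPolynomial.X (T.entry r j) : MvPolynomial ℕ ℤ)
      = ∏ m ∈ Finset.range M, MvPolynomial.X (m+1) ^ (toP T (m+1) r - toP T m r) := by
    intro r M
    induction M with
    | zero => rw [hP.1]; simp
    | succ M ih =>
      rw [Finset.prod_range_succ, ← ih, ← Finset.prod_range_mul_prod_Ico _ (GT.mono hP M r)]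
      congr 1
      rw [← Nat.card_Ico, ← Finset.prod_const]
      apply Finset.prod_congr rfl
      intro j hj
      rw [Finset.mem_Ico] at hj
      have h1 := (toP_iff T (M+1) r j).1 hj.2
      have h2 := mt (toP_iff T M r j).2 (by omega)
      congr 1
      have : ¬ T.entry r j ≤ M := fun h => h2 ⟨h1.1, h⟩
      omega
  let F : ℕ → MvPolynomial ℕ ℤ := fun r =>
    ∏ j ∈ Finset.range (shp k lam r), MvPolynomial.X (T.entry r j)
  have hF : ∀ r, shp k lam r = 0 → F r = 1 := by
    intro r hr
    simp only [F, hr, Finset.range_zero, Finset.prod_empty]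
  have h1 : T.weight = ∏ r ∈ Finset.range k, F r := by
    unfold SSYT.weight
    apply Finset.prod_congr rfl
    intro r hr
    rw [Finset.mem_range] at hr
    simp only [F, shp, if_pos hr]
  have h2 : ∏ r ∈ Finset.range k, F r = ∏ r ∈ Finset.range (max k n), F r := by
    apply Finset.prod_subset
    · intro r; simp only [Finset.mem_range]; omega
    · intro r _ hr
      rw [Finset.mem_range] at hr
      apply hF
      unfold shp; rw [if_neg hr]
  have h3 : ∏ r ∈ Finset.range n, F r = ∏ r ∈ Finset.range (max k n), F r := by
    apply Finset.prod_subset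
    · intro r; simp only [Finset.mem_range]; omega
    · intro r _ hr
      rw [Finset.mem_range] at hr
      apply hF
      exact shp_zero h hn r (by omega)
  rw [h1, h2, ← h3]
  have h4 : ∀ r, F r = ∏ m ∈ Finset.range n,
      MvPolynomial.X (m+1) ^ (toP T (m+1) r - toP T m r) := by
    intro r
    rw [← hrow r n, hP.2.2 n le_rfl]
  simp only [h4]
  rw [Finset.prod_comm, Finset.prod_range]
  apply Finset.prod_congr rfl
  intro i _
  rw [Finset.prod_pow_eq_pow_sum]
  rfl

lemma schur_eq {k : ℕ} {lam : ℕ → ℤ} {n : ℕ} (h : IsPartitionSeq k lam)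
    (hn : n < k → lam n ≤ 0) : schur k lam 1 n = gtS n (shp k lam) (xx n) := by
  unfold schur gtS
  rw [if_pos h]
  have e : ∀ T : SSYT k lam 1 n, T.weight =
      (fun P : GT n (shp k lam) => ∏ i : Fin n, xx n i ^ wt n P.1 i) (ssytEquiv h T) :=
    fun T => weight_eq h hn T
  rw [finsum_congr e, finsum_comp_equiv (ssytEquiv h)
    (f := fun P : GT n (shp k lam) => ∏ i : Fin n, xx n i ^ wt n P.1 i),
    finsum_set_coe_eq_finsum_mem (s := GT n (shp k lam))
      (f := fun P => ∏ i : Fin n, xx n i ^ wt n P i),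
    finsum_mem_eq_finite_toFinset_sum]

lemma schur_not {k : ℕ} {lam : ℕ → ℤ} {n : ℕ} (h : ¬ IsPartitionSeq k lam) :
    schur k lam 1 n = 0 := by
  unfold schur
  rw [if_neg h]

lemma schur_long {k : ℕ} {lam : ℕ → ℤ} {n : ℕ} (hn : n < k) (hl : 0 < lam n) :
    schur k lam 1 n = 0 := by
  by_cases h : IsPartitionSeq k lam
  · unfold schur
    rw [if_pos h]
    have : IsEmpty (SSYT k lam 1 n) := by
      constructor
      intro T
      have hpos : ∀ i, i ≤ n → 0 < shp k lam i := by
        intro i hi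
        have h1 : 0 < shp k lam n := shp_lt.2 ⟨hn, by simpa using hl⟩
        exact h1.trans_le (antitone_nat_of_succ_le (shp_anti h) hi)
      have key : ∀ i, i ≤ n → i + 1 ≤ T.entry i 0 := by
        intro i
        induction i with
        | zero =>
          intro hi
          have := shp_lt.1 (hpos 0 hi)
          exact T.lower 0 0 this.1 this.2
        | succ i ih =>
          intro hi
          have h1 := shp_lt.1 (hpos (i+1) hi)
          have h2 := T.col_strict i (i+1) 0 (by omega) h1.1 h1.2
          have := ih (by omega)
          omega
      have h1 := key n le_rfl
      have h2 := shp_lt.1 (hpos n le_rfl)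
      have := T.upper n 0 h2.1 h2.2
      omega
    exact finsum_of_isEmpty _
  · exact schur_not h

/-! ### Schur positivity of products -/

lemma SchurPositive.zero (n : ℕ) : SchurPositive n 0 := ⟨[], by simp, by simp⟩

lemma SchurPositive.add {n : ℕ} {f g : MvPolynomial ℕ ℤ} (hf : SchurPositive n f)
    (hg : SchurPositive n g) : SchurPositive n (f + g) := by
  obtain ⟨L, h1, h2⟩ := hf
  obtain ⟨L', h1', h2'⟩ := hg
  refine ⟨L ++ L', ?_, ?_⟩
  · intro p hp
    rcases List.mem_append.1 hp with h | h
    · exact h1 p h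
    · exact h1' p h
  · rw [h2, h2', List.map_append, List.sum_append]

lemma SchurPositive.sum {ι : Type*} {n : ℕ} (s : Finset ι) (f : ι → MvPolynomial ℕ ℤ)
    (hf : ∀ i ∈ s, SchurPositive n (f i)) : SchurPositive n (∑ i ∈ s, f i) := by
  classical
  induction s using Finset.induction_on with
  | empty => simpa using SchurPositive.zero n
  | insert a s ha ih =>
    rw [Finset.sum_insert ha]
    exact (hf a (Finset.mem_insert_self a s)).add
      (ih fun i hi => hf i (Finset.mem_insert_of_mem hi))

lemma gtS_positive {n : ℕ} {μ : ℕ → ℕ} (hμ : ∀ i, μ (i+1) ≤ μ i) (h0 : ∀ i, n ≤ i → μ i = 0) :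
    SchurPositive n (gtS n μ (xx n)) := by
  have hp : IsPartitionSeq n (fun i => (μ i : ℤ)) :=
    ⟨fun i _ => Int.ofNat_le.2 (hμ i), fun i _ => by positivity⟩
  refine ⟨[(n, fun i => (μ i : ℤ))], ?_, ?_⟩
  · intro p h
    rw [List.mem_singleton] at h
    subst h
    exact hp
  · have e : shp n (fun i => (μ i : ℤ)) = μ := by
      funext i
      unfold shp
      split_ifs with h
      · simp
      · exact (h0 i (by omega)).symm
    simp only [List.map_cons, List.map_nil, List.sum_cons, List.sum_nil, add_zero]
    rw [schur_eq hp (by omega), e]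

/-- the denominator -/
noncomputable def V (n : ℕ) : MvPolynomial ℕ ℤ := alt n (xx n) (fun i => n - 1 - i)

/-- the numerators -/
noncomputable def N (n : ℕ) (μ : ℕ → ℕ) : MvPolynomial ℕ ℤ :=
  alt n (xx n) (fun i => μ i + (n - 1 - i))

lemma xx_inj (n : ℕ) : Function.Injective (xx n) := by
  intro i j h
  have := MvPolynomial.X_injective (R := ℤ) h
  exact Fin.ext (by omega)

lemma V_ne (n : ℕ) : V n ≠ 0 := by
  have h1 : (Matrix.vandermonde (xx n)).det ≠ 0 :=
    Matrix.det_vandermonde_ne_zero_iff.2 (xx_inj n)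
  have h2 := Matrix.det_permute' Fin.revPerm (Matrix.vandermonde (xx n))
  have e : (Matrix.of fun i j : Fin n => xx n i ^ (n - 1 - (j : ℕ))) =
      (Matrix.vandermonde (xx n)).submatrix id Fin.revPerm := by
    ext1 i j
    simp only [Matrix.of_apply, Matrix.submatrix_apply, id, Matrix.vandermonde_apply,
      Fin.revPerm_apply, Fin.val_rev]
    congr 1
    omega
  unfold V alt
  rw [e, h2]
  apply mul_ne_zero _ h1
  rcases Int.units_eq_one_or (Equiv.Perm.sign (Fin.revPerm : Equiv.Perm (Fin n))) with h | h <;>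
    rw [h] <;> simp

lemma V_mul {n : ℕ} {μ : ℕ → ℕ} (hμ : ∀ i, μ (i+1) ≤ μ i) (h0 : ∀ i, n ≤ i → μ i = 0) :
    V n * gtS n μ (xx n) = N n μ := bialternant hμ h0 (xx n)

lemma mul_positive {n : ℕ} {l μ : ℕ → ℕ} (hl : ∀ i, l (i+1) ≤ l i) (hl0 : ∀ i, n ≤ i → l i = 0)
    (hμ : ∀ i, μ (i+1) ≤ μ i) :
    SchurPositive n (gtS n l (xx n) * gtS n μ (xx n)) := by
  classical
  have hb : ∀ r, μ r ≤ μ 0 := fun r => antitone_nat_of_succ_le hμ (Nat.zero_le r)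
  let ν : (ℕ → ℕ → ℕ) → ℕ → ℕ := fun P i => if i < n then l i + wt n P i else 0
  have hν : ∀ P, Good n l P → ∀ i, ν P (i+1) ≤ ν P i := by
    intro P hP i
    have h1 := hP 0 i
    unfold Bad at h1
    simp only [ν, wt]
    split_ifs <;> omega
  have hν0 : ∀ P, ∀ i, n ≤ i → ν P i = 0 := by
    intro P i hi
    simp only [ν]
    rw [if_neg (by omega)]
  have key : gtS n l (xx n) * gtS n μ (xx n) =
      ∑ P ∈ (GT.finite n μ).toFinset with Good n l P, gtS n (ν P) (xx n) := by
    apply mul_left_cancel₀ (V_ne n)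
    rw [← mul_assoc, V_mul hl hl0, Finset.mul_sum]
    unfold N
    rw [LR hb (fun i _ => hl i)]
    apply Finset.sum_congr rfl
    intro P hP
    rw [Finset.mem_filter] at hP
    rw [V_mul (hν P hP.2) (hν0 P)]
    unfold N
    apply alt_congr
    intro i hi
    simp only [ν, if_pos hi]
  rw [key]
  apply SchurPositive.sum
  intro P hP
  rw [Finset.mem_filter] at hP
  exact gtS_positive (hν P hP.2) (hν0 P)

lemma schur_mul_positive {k k' n : ℕ} {lam lam' : ℕ → ℤ} :
    SchurPositive n (schur k lam 1 n * schur k' lam' 1 n) := by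
  by_cases h : IsPartitionSeq k lam
  swap
  · rw [schur_not h, zero_mul]; exact SchurPositive.zero n
  by_cases hlamb : IsPartitionSeq k' lam'
  swap
  · rw [schur_not hlamb, mul_zero]; exact SchurPositive.zero n
  by_cases hn : n < k ∧ 0 < lam n
  · rw [schur_long hn.1 hn.2, zero_mul]; exact SchurPositive.zero n
  by_cases hn' : n < k' ∧ 0 < lam' n
  · rw [schur_long hn'.1 hn'.2, mul_zero]; exact SchurPositive.zero n
  rw [schur_eq h (by intro a; by_contra b; exact hn ⟨a, by omega⟩),
    schur_eq hlamb (by intro a; by_contra b; exact hn' ⟨a, by omega⟩)]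
  exact mul_positive (shp_anti h) (shp_zero h
    (by intro a; by_contra b; exact hn ⟨a, by omega⟩)) (shp_anti hlamb)

/-! ### The Plücker relation -/

section plucker
variable {R : Type*} [CommRing R]

/-- move entry `i` to position `j`. -/
def mv (i j : ℕ) (α : ℕ → ℕ) (t : ℕ) : ℕ :=
  if t < i then α t else if t < j then α (t+1) else if t = j then α i else α t

lemma alt_mv {n : ℕ} (x : Fin n → R) (α : ℕ → ℕ) (i d : ℕ) (h : i + d < n) :
    alt n x (mv i (i+d) α) = (-1) ^ d * alt n x α := by
  induction d with
  | zero =>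
    rw [pow_zero, one_mul]
    apply alt_congr
    intro t _
    unfold mv
    split_ifs <;> first | rfl | omega | (congr 1; omega)
  | succ d ih =>
    rw [pow_succ, mul_assoc, neg_one_mul, mul_neg, ← ih (by omega)]
    apply alt_swap x (i+d) (by omega)
    · unfold mv; rw [if_neg (by omega), if_pos (by omega), if_neg (by omega), if_neg (by omega),
        if_neg (by omega)]
    · unfold mv; rw [if_neg (by omega), if_neg (by omega), if_pos (by omega), if_neg (by omega),
        if_neg (by omega), if_pos rfl]
    · intro t _ h1 h2
      unfold mv
      split_ifs <;> first | rfl | omega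

/-- exponents with column `s` deleted, shifted by one after `s` -/
def remE (n s : ℕ) (α : ℕ → ℕ) (t : ℕ) : ℕ :=
  if t < s then α t else if t + 1 < n then α (t+1) + 1 else 0

/-- exponents with column `s` deleted, all shifted by one -/
def plusE (n s : ℕ) (α : ℕ → ℕ) (t : ℕ) : ℕ :=
  if t < s then α t + 1 else if t + 1 < n then α (t+1) + 1 else 0

/-- exponents lowered before `s`, with `α i` inserted at `i` and `α s` deleted. -/
def tauE (s i : ℕ) (α : ℕ → ℕ) (t : ℕ) : ℕ :=
  if t < i then α t - 1 else if t = i then α i else if t ≤ s then α (t-1) - 1 else α t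

/-- exponents lowered before `s`. -/
def minusE (s : ℕ) (α : ℕ → ℕ) (t : ℕ) : ℕ := if t < s then α t - 1 else α t

lemma plucker [IsDomain R] {n : ℕ} (x : Fin n → R) (hx : ∏ i, x i ≠ 0) (s : ℕ) (hs : s < n)
    (α : ℕ → ℕ) (hα : ∀ t, t < s → 1 ≤ α t) :
    alt n x α * alt n x (remE n s α) = alt n x (minusE s α) * alt n x (plusE n s α) +
      ∑ i ∈ Finset.range s, alt n x (plusE n i α) * alt n x (tauE s i α) := by
  let DM : Matrix (Fin n) (Fin n) R := Matrix.of fun i j => x i ^ (α j + 1)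
  let NN : Matrix (Fin n) (Fin n) R := Matrix.of fun i j => x i ^ (if (j : ℕ) < s then α j else α j + 1)
  let one : Fin n → R := fun _ => 1
  let sf : Fin n := ⟨s, hs⟩
  have hscale : ∀ β γ : ℕ → ℕ, (∀ t, t < n → β t = γ t + 1) →
      alt n x β = (∏ i, x i) * alt n x γ := by
    intro β γ h
    unfold alt
    rw [← Matrix.det_mul_column]
    congr 1
    ext i j
    simp only [Matrix.of_apply]
    rw [h j j.2, pow_succ']
  have hD : DM.det = (∏ i, x i) * alt n x α := hscale (fun t => α t + 1) α (fun _ _ => rfl)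
  have hupd : ∀ (β : ℕ → ℕ) (i : Fin n) (e : ℕ),
      ((Matrix.of fun a b : Fin n => x a ^ β b).updateCol i (fun a => x a ^ e)).det =
      alt n x (fun t => if t = i then e else β t) := by
    intro β i e
    unfold alt
    congr 1
    ext a b
    rw [Matrix.updateCol_apply]
    simp only [Matrix.of_apply]
    by_cases h : b = i
    · subst h; simp
    · rw [if_neg h, if_neg (fun h' => h (Fin.ext h'))]
  have hone : one = fun a => x a ^ 0 := by funext a; simp [one]
  have hc1 : ∀ i : Fin n, Matrix.cramer DM one i = (-1) ^ (n - 1 - i) * alt n x (plusE n i α) := by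
    intro i
    rw [Matrix.cramer_apply, hone]
    have e1 := hupd (fun t => α t + 1) i 0
    have e2 := alt_mv x (fun t => if t = (i : ℕ) then 0 else α t + 1) i (n - 1 - i) (by omega)
    rw [show DM = Matrix.of fun a b : Fin n => x a ^ (α b + 1) from rfl, e1]
    have e3 : alt n x (mv i (i + (n - 1 - i)) (fun t => if t = (i : ℕ) then 0 else α t + 1)) =
        alt n x (plusE n i α) := by
      apply alt_congr
      intro t ht
      unfold mv plusE
      beta_reduce
      split_ifs <;> omega
    rw [← e3, e2, ← mul_assoc, ← pow_add, Even.neg_one_pow ⟨_, rfl⟩, one_mul]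
  have hL1 : Matrix.cramer NN one sf = (-1) ^ (n - 1 - s) * alt n x (remE n s α) := by
    rw [Matrix.cramer_apply, hone]
    have e1 := hupd (fun t => if t < s then α t else α t + 1) sf 0
    have e2 := alt_mv x (fun t => if t = s then 0 else if t < s then α t else α t + 1) s
      (n - 1 - s) (by omega)
    rw [show NN = Matrix.of fun a b : Fin n => x a ^ (if (b : ℕ) < s then α b else α b + 1)
      from rfl, e1]
    have e3 : alt n x (mv s (s + (n - 1 - s))
        (fun t => if t = s then 0 else if t < s then α t else α t + 1)) =
        alt n x (remE n s α) := by
      apply alt_congr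
      intro t ht
      unfold mv remE
      beta_reduce
      split_ifs <;> omega
    rw [← e3, e2, ← mul_assoc, ← pow_add, Even.neg_one_pow ⟨_, rfl⟩, one_mul]
  have hL2 : ∀ i : Fin n, Matrix.cramer NN (fun a => DM a i) sf =
      (∏ i, x i) * alt n x (fun t => if t = s then α i else if t < s then α t - 1 else α t) := by
    intro i
    rw [Matrix.cramer_apply]
    have e1 := hupd (fun t => if t < s then α t else α t + 1) sf (α i + 1)
    rw [show NN = Matrix.of fun a b : Fin n => x a ^ (if (b : ℕ) < s then α b else α b + 1)
      from rfl, show (fun a => DM a i) = fun a => x a ^ (α i + 1) from rfl, e1]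
    apply hscale
    intro t ht
    have := hα t
    change (if t = s then _ else _) = _
    split_ifs <;> omega
  have hL3 : ∀ i : Fin n, s < i → Matrix.cramer NN (fun a => DM a i) sf = 0 := by
    intro i hi
    rw [Matrix.cramer_apply]
    have hne : sf ≠ i := by
      intro h; rw [← h] at hi; simp [sf] at hi
    apply Matrix.det_zero_of_column_eq hne
    intro a
    rw [Matrix.updateCol_self, Matrix.updateCol_ne hne.symm]
    simp only [DM, NN, Matrix.of_apply]
    rw [if_neg (by omega)]
  have hcr : DM.det * Matrix.cramer NN one sf =
      ∑ i : Fin n, Matrix.cramer DM one i * Matrix.cramer NN (fun a => DM a i) sf := by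
    have h1 : DM.det • one = ∑ i : Fin n, Matrix.cramer DM one i • (fun a => DM a i) := by
      rw [← Matrix.mulVec_cramer]
      funext a
      rw [Finset.sum_apply]
      simp only [Matrix.mulVec, dotProduct, Pi.smul_apply, smul_eq_mul]
      apply Finset.sum_congr rfl
      intro i _
      ring
    have h2 := congrArg (fun w => Matrix.cramer NN w sf) h1
    simp only [map_smul, map_sum, Finset.sum_apply, Pi.smul_apply, smul_eq_mul] at h2
    exact h2
  -- convert the sum into a sum over `range`
  let f : ℕ → R := fun i => (-1) ^ (n - 1 - i) * alt n x (plusE n i α) *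
    ((∏ i, x i) * alt n x (fun t => if t = s then α i else if t < s then α t - 1 else α t))
  have hsum : ∑ i : Fin n, Matrix.cramer DM one i * Matrix.cramer NN (fun a => DM a i) sf =
      ∑ i ∈ Finset.range (s+1), f i := by
    have h1 : ∀ i : Fin n, Matrix.cramer DM one i * Matrix.cramer NN (fun a => DM a i) sf =
        (fun i : ℕ => if i < s + 1 then f i else 0) i := by
      intro i
      by_cases h : (i : ℕ) < s + 1
      · simp only [if_pos h, f]
        rw [hc1, hL2]
      · simp only [if_neg h]
        rw [hL3 i (by omega), mul_zero]
    rw [Finset.sum_congr rfl (fun i _ => h1 i),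
      ← Finset.sum_range (n := n) (fun i : ℕ => if i < s + 1 then f i else 0)]
    symm
    rw [← Finset.sum_subset (s₁ := Finset.range (s+1)) (s₂ := Finset.range n)]
    · apply Finset.sum_congr rfl
      intro i hi
      rw [Finset.mem_range] at hi
      rw [if_pos hi]
    · intro i; simp only [Finset.mem_range]; omega
    · intro i _ hi
      rw [Finset.mem_range] at hi
      rw [if_neg hi]
  have hfs : f s = (∏ i, x i) * (-1) ^ (n - 1 - s) *
      (alt n x (minusE s α) * alt n x (plusE n s α)) := by
    have : alt n x (fun t => if t = s then α s else if t < s then α t - 1 else α t) =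
        alt n x (minusE s α) := by
      apply alt_congr
      intro t _
      unfold minusE
      split_ifs with h1 h2
      · omega
      · rw [h1]
      · rfl
      · rfl
    simp only [f]
    rw [this]
    ring
  have hfi : ∀ i ∈ Finset.range s, f i = (∏ i, x i) * (-1) ^ (n - 1 - s) *
      (alt n x (plusE n i α) * alt n x (tauE s i α)) := by
    intro i hi
    rw [Finset.mem_range] at hi
    have e2 := alt_mv x (tauE s i α) i (s - i) (by omega)
    have e3 : alt n x (mv i (i + (s - i)) (tauE s i α)) =
        alt n x (fun t => if t = s then α i else if t < s then α t - 1 else α t) := by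
      apply alt_congr
      intro t _
      unfold mv tauE
      have : t + 1 - 1 = t := by omega
      rw [this]
      split_ifs <;> first | rfl | omega
    have e4 : ((-1 : R)) ^ (n - 1 - i) * (-1) ^ (s - i) = (-1) ^ (n - 1 - s) := by
      rw [← pow_add, show n - 1 - i + (s - i) = (n - 1 - s) + ((s - i) + (s - i)) by omega,
        pow_add, Even.neg_one_pow (n := (s - i) + (s - i)) ⟨_, rfl⟩, mul_one]
    simp only [f]
    rw [← e3, e2, ← e4]
    ring
  rw [hsum, Finset.sum_range_succ, hfs, Finset.sum_congr rfl hfi, ← Finset.mul_sum, hD, hL1,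
    ← mul_add] at hcr
  have hne : (∏ i, x i) * (-1) ^ (n - 1 - s) ≠ 0 :=
    mul_ne_zero hx (pow_ne_zero _ (neg_ne_zero.2 one_ne_zero))
  apply mul_left_cancel₀ hne
  rw [add_comm (alt n x (minusE s α) * alt n x (plusE n s α)), ← hcr]
  ring

lemma alt_eq_zero {n : ℕ} (x : Fin n → R) (α : ℕ → ℕ) (i : ℕ) (hi : i + 1 < n)
    (h : α i = α (i+1)) : alt n x α = 0 := by
  unfold alt
  apply Matrix.det_zero_of_column_eq (i := (⟨i, by omega⟩ : Fin n)) (j := ⟨i+1, hi⟩) (by simp)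
  intro a
  simp only [Matrix.of_apply, h]

end plucker

lemma prod_xx_ne (n : ℕ) : ∏ i, xx n i ≠ 0 :=
  Finset.prod_ne_zero_iff.2 fun _ _ => MvPolynomial.X_ne_zero _

lemma alt_scale {R : Type*} [CommRing R] {n : ℕ} (x : Fin n → R) (β γ : ℕ → ℕ)
    (h : ∀ t, t < n → β t = γ t + 1) : alt n x β = (∏ i, x i) * alt n x γ := by
  unfold alt
  rw [← Matrix.det_mul_column]
  congr 1
  ext1 i j
  simp only [Matrix.of_apply]
  rw [h j j.2, pow_succ']

set_option maxHeartbeats 1000000 in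
lemma core {n : ℕ} {μ : ℕ → ℕ} (hμ : ∀ i, μ (i+1) ≤ μ i) (h0 : ∀ i, n ≤ i → μ i = 0)
    (s : ℕ) (hs : s < n) (α : ℕ → ℕ) (hα : α = fun i => μ i + (n - 1 - i)) :
    ∃ D, SchurPositive n D ∧ alt n (xx n) α * alt n (xx n) (remE n s α) =
      alt n (xx n) (minusE s α) * alt n (xx n) (plusE n s α) + V n * V n * D := by
  have hα' : ∀ i, α i = μ i + (n - 1 - i) := fun i => by rw [hα]
  have hterm : ∀ i, ∃ T, i < s → SchurPositive n T ∧
      alt n (xx n) (plusE n i α) * alt n (xx n) (tauE s i α) = V n * V n * T := by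
    intro i
    by_cases his : i < s
    swap
    · exact ⟨0, fun h => absurd h his⟩
    by_cases hi : 1 ≤ i ∧ μ (i-1) = μ i
    · refine ⟨0, fun _ => ⟨SchurPositive.zero n, ?_⟩⟩
      rw [alt_eq_zero (xx n) (tauE s i α) (i-1) (by omega), mul_zero, mul_zero]
      unfold tauE
      rw [show i - 1 + 1 = i by omega, if_pos (by omega), if_neg (by omega), if_pos rfl,
        hα', hα']
      omega
    · let κ : ℕ → ℕ := fun t => if t < i then μ t + 1 else μ (t+1)
      let τ : ℕ → ℕ := fun t => if t < i then μ t - 1 else if t = i then μ i else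
        if t ≤ s then μ (t-1) else μ t
      have hκ : ∀ t, κ (t+1) ≤ κ t := by
        intro t
        have := hμ t
        have := hμ (t+1)
        simp only [κ]
        split_ifs <;> omega
      have hκ0 : ∀ t, n ≤ t → κ t = 0 := by
        intro t ht
        simp only [κ]
        rw [if_neg (by omega)]
        exact h0 _ (by omega)
      have hτ : ∀ t, τ (t+1) ≤ τ t := by
        intro t
        have a1 := hμ t
        have a2 := hμ (t-1)
        simp only [τ]
        rw [show t + 1 - 1 = t by omega]
        by_cases b1 : t + 1 < i
        · rw [if_pos b1, if_pos (by omega)]; omega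
        · rw [if_neg b1]
          by_cases b2 : t + 1 = i
          · rw [if_pos b2, if_pos (by omega)]
            subst b2
            have : μ (t+1-1) ≠ μ (t+1) := fun h => hi ⟨by omega, h⟩
            rw [show t + 1 - 1 = t by omega] at this
            omega
          · rw [if_neg b2]
            by_cases b3 : t = i
            · subst b3
              rw [if_neg (show ¬ t < t by omega), if_pos rfl]
              split_ifs <;> omega
            · rw [if_neg (show ¬ t < i by omega), if_neg b3]
              rw [show t - 1 + 1 = t by omega] at a2
              split_ifs <;> omega
      have hτ0 : ∀ t, n ≤ t → τ t = 0 := by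
        intro t ht
        simp only [τ]
        rw [if_neg (by omega), if_neg (by omega), if_neg (by omega)]
        exact h0 _ (by omega)
      refine ⟨gtS n κ (xx n) * gtS n τ (xx n), fun _ => ⟨mul_positive hκ hκ0 hτ, ?_⟩⟩
      rw [mul_mul_mul_comm, V_mul hκ hκ0, V_mul hτ hτ0]
      unfold N
      congr 1
      · apply alt_congr
        intro t ht
        have := h0 (t+1)
        simp only [plusE, κ, hα']
        split_ifs <;> omega
      · apply alt_congr
        intro t ht
        have hp : t < i → 1 ≤ μ t := by
          intro h
          have q1 : μ (i-1) ≠ μ i := fun h' => hi ⟨by omega, h'⟩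
          have q2 := hμ (i-1)
          rw [show i - 1 + 1 = i by omega] at q2
          have q3 := antitone_nat_of_succ_le hμ (show t ≤ i - 1 by omega)
          omega
        simp only [tauE, τ, hα']
        split_ifs with b1 b2 b3
        · omega
        · rw [b2]
        · omega
        · rfl
  choose T hT using hterm
  refine ⟨∑ i ∈ Finset.range s, T i, SchurPositive.sum _ _ fun i hi =>
    (hT i (Finset.mem_range.1 hi)).1, ?_⟩
  rw [plucker (xx n) (prod_xx_ne n) s hs α (fun t ht => by rw [hα']; omega), Finset.mul_sum]
  congr 1
  apply Finset.sum_congr rfl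
  intro i hi
  exact (hT i (Finset.mem_range.1 hi)).2

lemma V_schur {k n : ℕ} {lam : ℕ → ℤ} (h : IsPartitionSeq k lam) (hn : n < k → lam n ≤ 0)
    {β : ℕ → ℕ} (hβ : ∀ t, t < n → shp k lam t + (n - 1 - t) = β t) :
    V n * schur k lam 1 n = alt n (xx n) β := by
  rw [schur_eq h hn, V_mul (shp_anti h) (shp_zero h hn)]
  exact alt_congr _ hβ

lemma main_aux (k s n : ℕ) (hsk : s < k) (hn : 1 ≤ n) (nu : ℕ → ℤ)
    (hdec : ∀ i, i + 1 < k → nu (i + 1) ≤ nu i) (hpos : ∀ i, i < k → 0 ≤ nu i) :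
    SchurPositive n
      (schur k nu 1 n * schur (k - 1) (fun j => if j < s then nu j else nu (j + 1)) 1 n -
        schur k (fun j => if j < s then nu j - 1 else nu j) 1 n *
          schur (k - 1) (fun j => if j < s then nu j + 1 else nu (j + 1)) 1 n) := by
  by_cases hsn : n < s
  · -- the subtracted product vanishes
    rw [schur_long (n := n) (k := k - 1) (lam := fun j => if j < s then nu j + 1 else nu (j + 1))
      (by omega) (by simp only [if_pos hsn]; have := hpos n (by omega); omega), mul_zero, sub_zero]
    exact schur_mul_positive
  by_cases hlong : n < k ∧ 0 < nu n
  · rw [schur_long hlong.1 hlong.2, schur_long (k := k) (n := n)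
      (lam := fun j => if j < s then nu j - 1 else nu j) hlong.1
      (by simp only [if_neg hsn]; exact hlong.2), zero_mul, zero_mul, sub_zero]
    exact SchurPositive.zero n
  have hshort : n < k → nu n ≤ 0 := by
    intro h; by_contra h'; exact hlong ⟨h, by omega⟩
  have hν : IsPartitionSeq k nu := ⟨hdec, hpos⟩
  have hrem : IsPartitionSeq (k-1) (fun j => if j < s then nu j else nu (j + 1)) := by
    constructor
    · intro i hi
      have := hdec i (by omega)
      have := hdec (i+1) (by omega)
      simp only
      split_ifs <;> omega
    · intro i hi
      have := hpos i (by omega)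
      have := hpos (i+1) (by omega)
      simp only
      split_ifs <;> omega
  have hplus : IsPartitionSeq (k-1) (fun j => if j < s then nu j + 1 else nu (j + 1)) := by
    constructor
    · intro i hi
      have := hdec i (by omega)
      have := hdec (i+1) (by omega)
      simp only
      split_ifs <;> omega
    · intro i hi
      have := hpos i (by omega)
      have := hpos (i+1) (by omega)
      simp only
      split_ifs <;> omega
  have hremn : n < k - 1 → (fun j => if j < s then nu j else nu (j + 1)) n ≤ 0 := by
    intro h
    simp only [if_neg hsn]
    have := hshort (by omega)
    have := hdec n (by omega)
    omega
  have hplusn : n < k - 1 → (fun j => if j < s then nu j + 1 else nu (j + 1)) n ≤ 0 := by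
    intro h
    simp only [if_neg hsn]
    have := hshort (by omega)
    have := hdec n (by omega)
    omega
  have hVV : V n * V n ≠ 0 := mul_ne_zero (V_ne n) (V_ne n)
  have hμ := shp_anti hν
  have hμ0 := shp_zero hν hshort
  -- shapes
  have es1 : ∀ t, shp (k-1) (fun j => if j < s then nu j else nu (j + 1)) t =
      if t < s then shp k nu t else shp k nu (t+1) := by
    intro t
    unfold shp
    beta_reduce
    split_ifs <;> first | rfl | omega
  have es2 : ∀ t, shp (k-1) (fun j => if j < s then nu j + 1 else nu (j + 1)) t =
      if t < s then shp k nu t + 1 else shp k nu (t+1) := by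
    intro t
    have := hpos t
    unfold shp
    beta_reduce
    split_ifs <;> first | rfl | omega
  have es3 : ∀ t, shp k (fun j => if j < s then nu j - 1 else nu j) t =
      if t < s then shp k nu t - 1 else shp k nu t := by
    intro t
    unfold shp
    beta_reduce
    split_ifs <;> first | rfl | omega
  have hminusn : n < k → (fun j => if j < s then nu j - 1 else nu j) n ≤ 0 := by
    intro h
    simp only [if_neg hsn]
    exact hshort h
  have hminus : (1 ≤ s ∧ nu (s-1) = nu s) ∧
      ¬ IsPartitionSeq k (fun j => if j < s then nu j - 1 else nu j) ∨
      ¬ (1 ≤ s ∧ nu (s-1) = nu s) ∧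
      IsPartitionSeq k (fun j => if j < s then nu j - 1 else nu j) := by
    by_cases h : 1 ≤ s ∧ nu (s-1) = nu s
    · left
      refine ⟨h, fun hp => ?_⟩
      have := hp.1 (s-1) (by omega)
      simp only at this
      rw [show s - 1 + 1 = s by omega, if_neg (by omega), if_pos (by omega)] at this
      omega
    · right
      refine ⟨h, ?_, ?_⟩
      · intro i hi
        have h1 := hdec i hi
        have h2 : i + 1 = s → nu i ≠ nu s := by
          rintro h2 h3
          exact h ⟨by omega, by rw [← h2, Nat.add_sub_cancel, h2]; exact h3⟩
        simp only
        split_ifs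
        · omega
        · omega
        · have h4 : i + 1 = s := by omega
          have := h2 h4
          rw [h4] at h1 ⊢
          omega
        · omega
      · intro i hi
        simp only
        split_ifs with h1
        · have h3 : nu (s-1) ≠ nu s := fun h' => h ⟨by omega, h'⟩
          have h4 := hdec (s-1) (by omega)
          rw [show s - 1 + 1 = s by omega] at h4
          have h5 := hpos s hsk
          have h6 := antitone_nat_of_succ_le hμ (show i ≤ s - 1 by omega)
          unfold shp at h6
          rw [if_pos (by omega), if_pos (by omega)] at h6
          omega
        · exact hpos i hi
  by_cases hsn' : s < n
  · obtain ⟨D, hD, hid⟩ := core hμ hμ0 s hsn' _ rfl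
    set α : ℕ → ℕ := fun i => shp k nu i + (n - 1 - i) with hα
    have e1 : V n * schur k nu 1 n = alt n (xx n) α := V_schur hν hshort (fun _ _ => rfl)
    have e2 : V n * schur (k - 1) (fun j => if j < s then nu j else nu (j + 1)) 1 n =
        alt n (xx n) (remE n s α) := by
      apply V_schur hrem hremn
      intro t ht
      have := hμ0 (t+1)
      rw [es1]
      simp only [remE, hα]
      split_ifs <;> omega
    have e3 : V n * schur (k - 1) (fun j => if j < s then nu j + 1 else nu (j + 1)) 1 n =
        alt n (xx n) (plusE n s α) := by
      apply V_schur hplus hplusn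
      intro t ht
      have := hμ0 (t+1)
      rw [es2]
      simp only [plusE, hα]
      split_ifs <;> omega
    have e4 : V n * schur k (fun j => if j < s then nu j - 1 else nu j) 1 n =
        alt n (xx n) (minusE s α) := by
      rcases hminus with ⟨h1, h2⟩ | ⟨h1, h2⟩
      · rw [schur_not h2, mul_zero, alt_eq_zero (xx n) (minusE s α) (s-1) (by omega)]
        rw [show s - 1 + 1 = s by omega]
        simp only [minusE, hα]
        rw [if_pos (by omega), if_neg (by omega)]
        have : shp k nu (s-1) = shp k nu s := by
          unfold shp; rw [if_pos (by omega), if_pos (by omega), h1.2]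
        omega
      · apply V_schur h2 hminusn
        intro t ht
        rw [es3]
        have h3 : t < s → 1 ≤ shp k nu t := by
          intro h
          have := h2.2 t (by omega)
          simp only [if_pos h] at this
          unfold shp
          rw [if_pos (by omega)]
          omega
        simp only [minusE, hα]
        split_ifs
        · have := h3 (by assumption); omega
        · rfl
    have : schur k nu 1 n * schur (k - 1) (fun j => if j < s then nu j else nu (j + 1)) 1 n -
        schur k (fun j => if j < s then nu j - 1 else nu j) 1 n *
          schur (k - 1) (fun j => if j < s then nu j + 1 else nu (j + 1)) 1 n = D := by
      apply mul_left_cancel₀ hVV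
      have h1' : V n * V n * (schur k nu 1 n * schur (k - 1) (fun j => if j < s then nu j else nu (j + 1)) 1 n) =
          alt n (xx n) α * alt n (xx n) (remE n s α) := by
        rw [mul_mul_mul_comm, e1, e2]
      have h2' : V n * V n * (schur k (fun j => if j < s then nu j - 1 else nu j) 1 n * schur (k - 1) (fun j => if j < s then nu j + 1 else nu (j + 1)) 1 n) =
          alt n (xx n) (minusE s α) * alt n (xx n) (plusE n s α) := by
        rw [mul_mul_mul_comm, e4, e3]
      rw [mul_sub, h1', h2', hid]
      ring
    rw [this]
    exact hD
  · have hs : s = n := by omega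
    subst hs
    rcases hminus with ⟨h1, h2⟩ | ⟨h1, h2⟩
    · rw [schur_not h2, zero_mul, sub_zero]
      exact schur_mul_positive
    · set γ : ℕ → ℕ := fun i => shp k nu i - 1 + (s - 1 - i) with hγ
      have h3 : ∀ t, t < s → 1 ≤ shp k nu t := by
        intro t h
        have := h2.2 t (by omega)
        simp only [if_pos h] at this
        unfold shp
        rw [if_pos (by omega)]
        omega
      have e1 : V s * schur k nu 1 s = alt s (xx s) (fun t => γ t + 1) := by
        apply V_schur hν hshort
        intro t ht
        have := h3 t ht
        simp only [hγ]
        omega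
      have e2 : V s * schur (k - 1) (fun j => if j < s then nu j else nu (j + 1)) 1 s =
          alt s (xx s) (fun t => γ t + 1) := by
        apply V_schur hrem hremn
        intro t ht
        have := h3 t ht
        rw [es1, if_pos ht]
        simp only [hγ]
        omega
      have e3 : V s * schur (k - 1) (fun j => if j < s then nu j + 1 else nu (j + 1)) 1 s =
          alt s (xx s) (fun t => γ t + 1 + 1) := by
        apply V_schur hplus hplusn
        intro t ht
        have := h3 t ht
        rw [es2, if_pos ht]
        simp only [hγ]
        omega
      have e4 : V s * schur k (fun j => if j < s then nu j - 1 else nu j) 1 s =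
          alt s (xx s) γ := by
        apply V_schur h2 hminusn
        intro t ht
        rw [es3, if_pos ht]
      have : schur k nu 1 s * schur (k - 1) (fun j => if j < s then nu j else nu (j + 1)) 1 s -
          schur k (fun j => if j < s then nu j - 1 else nu j) 1 s *
            schur (k - 1) (fun j => if j < s then nu j + 1 else nu (j + 1)) 1 s = 0 := by
        apply mul_left_cancel₀ hVV
        have h1' : V s * V s * (schur k nu 1 s * schur (k - 1) (fun j => if j < s then nu j else nu (j + 1)) 1 s) =
            alt s (xx s) (fun t => γ t + 1) * alt s (xx s) (fun t => γ t + 1) := by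
          rw [mul_mul_mul_comm, e1, e2]
        have h2' : V s * V s * (schur k (fun j => if j < s then nu j - 1 else nu j) 1 s * schur (k - 1) (fun j => if j < s then nu j + 1 else nu (j + 1)) 1 s) =
            alt s (xx s) γ * alt s (xx s) (fun t => γ t + 1 + 1) := by
          rw [mul_mul_mul_comm, e4, e3]
        rw [mul_sub, h1', h2',
          alt_scale (xx s) (fun t => γ t + 1 + 1) (fun t => γ t + 1) (fun _ _ => rfl),
          alt_scale (xx s) (fun t => γ t + 1) γ (fun _ _ => rfl)]
        ring
      rw [this]
      exact SchurPositive.zero s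

/-- for a partition `ν = (ν_1 ≥ … ≥ ν_k ≥ 0)`, `1 ≤ t ≤ k` and `n ≥ 1`,
`s^{[n]}_ν · s^{[n]}_{(ν_1,…,ν_{t-1},ν_{t+1},…,ν_k)}
 - s^{[n]}_{(ν_1-1,…,ν_{t-1}-1,ν_t,…,ν_k)} · s^{[n]}_{(ν_1+1,…,ν_{t-1}+1,ν_{t+1},…,ν_k)}`
is Schur positive (with `s^{[n]}_α = 0` when `α` is not a partition, built into `schur`). -/
theorem stmt_19 (k t n : ℕ) (ht1 : 1 ≤ t) (htk : t ≤ k) (hn : 1 ≤ n) (nu : ℕ → ℤ)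
    (hdec : ∀ i, i + 1 < k → nu (i + 1) ≤ nu i) (hpos : ∀ i, i < k → 0 ≤ nu i) :
    SchurPositive n
      (schur k nu 1 n *
          schur (k - 1) (fun j => if j < t - 1 then nu j else nu (j + 1)) 1 n -
        schur k (fun j => if j < t - 1 then nu j - 1 else nu j) 1 n *
          schur (k - 1) (fun j => if j < t - 1 then nu j + 1 else nu (j + 1)) 1 n) := by
  exact main_aux k (t - 1) n (by omega) hn nu hdec hpos
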